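/- For all β(0,1)-trees T_1, …, T_k (k ≥ 1), ρ(T_1,…,T_k) = ν_1(σ(T_{k−1},…,T_1,ε), T_k), where ε denotes the trivial β(0,1)-tree. -/

import Mathlib

/-!
Since `lam 0 T` has root label 1, the tree ρ(T₁,…,T_k) is a root labeled 1 whose children are
T₁, …, T_k with root labels reset to 0 (`rho_eq_node`). Since μ₁(S,ε) = S when root(S) = 1,
σ(T_{k−1},…,T₁,ε) = ρ(T₁,…,T_{k−1},ε), whose last child is a single node labeled 0. That leaf ends
the rightmost path, and ν₁ attaches the children of T_k there and adds 0 to all labels on the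
path, which turns the last child into T_k with root label 0.
-/

/-- Labeled rooted plane trees: each node carries a natural-number label and an
ordered list of subtrees. -/
inductive BTree : Type
  | node : ℕ → List BTree → BTree
deriving Repr

namespace BTree

/-- The trivial β(0,1)-tree ε: a single node labeled 0. -/
def eps : BTree := node 0 []

/-- The label of the root of a tree. -/
def label : BTree → ℕ
  | node n _ => n

/-- The list of subtrees of the root. -/
def children : BTree → List BTree
  | node _ ts => ts

/-- The sum of the labels of the children of the root. -/
def childSum (t : BTree) : ℕ := (t.children.map label).sum

/-- Validity condition for non-root nodes of a β(0,1)-tree: leaves have label 0,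
and the label of every node exceeds the sum of its children's labels by at most one. -/
inductive ValidSub : BTree → Prop
  | mk (n : ℕ) (ts : List BTree) :
      (ts = [] → n = 0) →
      n ≤ (ts.map label).sum + 1 →
      (∀ t ∈ ts, ValidSub t) →
      ValidSub (node n ts)

/-- `t` is a β(0,1)-tree: the trivial tree is the single node labeled 0; otherwise the
root label is one more than the sum of its children's labels, and every non-root node
has label at most one more than the sum of its children's labels, leaves having label 0. -/
def IsBeta (t : BTree) : Prop :=
  (t.children = [] → t.label = 0) ∧
  (t.children ≠ [] → t.label = childSum t + 1) ∧
  ∀ c ∈ t.children, ValidSub c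

mutual
/-- The rightmost path of a tree, from the root to the rightmost leaf; each node on
the path is recorded together with its full subtree. -/
def rpath : BTree → List BTree
  | node n ts => node n ts :: rpathL ts
def rpathL : List BTree → List BTree
  | [] => []
  | [t] => rpath t
  | _ :: t :: ts => rpathL (t :: ts)
end

/-- A node is moderate if its label does not exceed the sum of its children's labels. -/
def moderate (t : BTree) : Bool := decide (t.label ≤ childSum t)

/-- A node (on the rightmost path) is open iff it is a leaf (i.e. it is the rightmost
leaf), or its rightmost child is a non-leaf moderate node. -/
def isOpenNode (t : BTree) : Bool :=
  match t.children.getLast? with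
  | none => true
  | some c => !c.children.isEmpty && moderate c

/-- The statistic `root`: the label of the root. -/
def rootStat (t : BTree) : ℕ := t.label

/-- The statistic `open`: the number of open nodes (all of which lie on the
rightmost path), with open(ε) = 0. -/
def openStat : BTree → ℕ
  | node 0 [] => 0
  | t => (rpath t).countP isOpenNode

/-- The statistic `rmod`: the number of moderate nodes on the rightmost path,
with rmod(ε) = 0. -/
def rmodStat : BTree → ℕ
  | node 0 [] => 0
  | t => (rpath t).countP moderate

mutual
/-- The number of nodes of a tree. -/
def size : BTree → ℕ
  | node _ ts => 1 + sizeL ts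
def sizeL : List BTree → ℕ
  | [] => 0
  | t :: ts => size t + sizeL ts
end

mutual
/-- The number of excessive nodes of a tree (nodes whose label exceeds the sum of the
labels of their children). -/
def excT : BTree → ℕ
  | node n ts => (if (ts.map label).sum < n then 1 else 0) + excL ts
def excL : List BTree → ℕ
  | [] => 0
  | t :: ts => excT t + excL ts
end

/-- The sum U ⊕ V of two trees: identify the two roots into a new root labeled
root(U) + root(V) − 1, its children being those of U followed by those of V. -/
def oplus (u v : BTree) : BTree := node (u.label + v.label - 1) (u.children ++ v.children)

/-- Relabel the root. -/
def setLabel (i : ℕ) (t : BTree) : BTree := node i t.children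

/-- λ_i(T): join a new root, labeled i+1, by an edge to the old root, which is relabeled i. -/
def lam (i : ℕ) (t : BTree) : BTree := node (i + 1) [setLabel i t]

/-- Iterated ⊕ of a list of trees (ε for the empty list). -/
def oplusList : List BTree → BTree
  | [] => eps
  | [t] => t
  | t :: ts => oplus t (oplusList ts)

/-- ρ(T₁,…,T_k) = λ₀(T₁) ⊕ ⋯ ⊕ λ₀(T_k). -/
def rho (Ts : List BTree) : BTree := oplusList (Ts.map (lam 0))

/-- Add one to the label of the root. -/
def incRoot (t : BTree) : BTree := node (t.label + 1) t.children

mutual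
/-- Walk down the rightmost path of a tree looking for the i-th open node x, adding one
to each label on the way (through x, and through the rightmost child y of x if x is not
a leaf); at x, append the children of S. -/
def muT (S : BTree) : ℕ → BTree → BTree
  | i, node n ts =>
    if isOpenNode (node n ts) && decide (i ≤ 1) then
      if ts.isEmpty then node (n + 1) S.children
      else node (n + 1) (ts.dropLast ++ [incRoot (ts.getLastD eps)] ++ S.children)
    else
      node (n + 1) (muL S (if isOpenNode (node n ts) then i - 1 else i) ts)
def muL (S : BTree) (i : ℕ) : List BTree → List BTree
  | [] => []
  | [t] => [muT S i t]
  | t :: ts => t :: muL S i ts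
end

/-- μ_i(S,T): identify the i-th open node x on the rightmost path of T with the root of
S, keeping the label of x, and add one to each node on the rightmost path of T between
the root and y (inclusive), where y = x if x is a leaf and otherwise y is the rightmost
child of x.  (In particular μ₁(S,ε) = S when root(S) = 1.) -/
def mu (i : ℕ) (S T : BTree) : BTree := muT S i T

mutual
/-- Walk down the rightmost path of a tree adding j to every label; at the rightmost
leaf, attach the children of T. -/
def nuT (T : BTree) (j : ℕ) : BTree → BTree
  | node n [] => node (n + j) T.children
  | node n ts => node (n + j) (nuL T j ts)
def nuL (T : BTree) (j : ℕ) : List BTree → List BTree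
  | [] => []
  | [t] => [nuT T j t]
  | t :: ts => t :: nuL T j ts
end

/-- ν_i(S,T): identify the rightmost leaf x of S with the root of T, keeping the zero
label of x, and add i − 1 to each node on the rightmost path of S between the root and
x (inclusive).  (In particular ν₁(S,ε) = S.) -/
def nu (i : ℕ) (S T : BTree) : BTree := nuT T (i - 1) S

/-- σ(T₁,…,T_k) = μ₁(ρ(T_{k−1},…,T₁,ε), T_k). -/
def sigma (Ts : List BTree) : BTree :=
  mu 1 (rho (Ts.dropLast.reverse ++ [eps])) (Ts.getLastD eps)

/-- The maximal suffix of a list of trees all of whose root labels are 0. -/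
def zeroSuffix : List BTree → List BTree
  | [] => []
  | t :: ts =>
    let z := zeroSuffix ts
    if z.length = ts.length ∧ t.label = 0 then t :: z else z

/-- Subtract one from the label of the root. -/
def decRoot (t : BTree) : BTree := node (t.label - 1) t.children

mutual
/-- Inverse of μ on β(0,1)-trees with root label > 1: walk down the rightmost path to
the parent x of the first node labeled 0 on the path (subtracting one from the labels
on the way); the maximal zero-labeled suffix of the children of x is the list of
children of S, the rest (with the label of its last element decremented) are the
children of x in T.  Returns the pair (T, S) such that the input is μ_i(S,T). -/
def decT : BTree → BTree × BTree
  | node n ts =>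
    if (ts.getLastD eps).label = 0 then
      let zs := zeroSuffix ts
      let ps := ts.take (ts.length - zs.length)
      (node (n - 1) (if ps.isEmpty then [] else ps.dropLast ++ [decRoot (ps.getLastD eps)]),
       node 1 zs)
    else
      (node (n - 1) (decL ts).1, (decL ts).2)
def decL : List BTree → List BTree × BTree
  | [] => ([], eps)
  | [t] => ([(decT t).1], (decT t).2)
  | t :: ts => (t :: (decL ts).1, (decL ts).2)
end

/-- Restore the root label of a β(0,1)-tree whose root label was forgotten:
ε for a single node, and otherwise one plus the sum of the children's labels. -/
def makeRoot : BTree → BTree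
  | node _ [] => eps
  | node _ ts => node ((ts.map label).sum + 1) ts

/-- Fueled version of the map g.  A β(0,1)-tree with root label 1 is ρ(T₁,…,T_k) where
the Tⱼ are recovered from the children via `makeRoot`, and g maps it to
σ(g(T₁),…,g(T_k)); a β(0,1)-tree U with root label > 1 is μ_i(S,T) where (T,S) = decT U
and i = open(U) + 1 − open(S) (since open(μ_i(S,T)) = i − 1 + open(S)), and g maps it
to ν_i(g(S),g(T)); finally g(ε) = ε. -/
def gF : ℕ → BTree → BTree
  | 0, t => t
  | fuel + 1, t =>
    match t with
    | node 0 _ => t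
    | node 1 cs => sigma (cs.map fun c => gF fuel (makeRoot c))
    | node _ _ =>
      nu (openStat t + 1 - openStat (decT t).2) (gF fuel (decT t).2) (gF fuel (decT t).1)

/-- The map g on β(0,1)-trees: g(ε) = ε, g(ρ(T₁,…,T_k)) = σ(g(T₁),…,g(T_k)), and
g(μ_i(S,T)) = ν_i(g(S), g(T)).  (The number of nodes suffices as fuel since all
recursive calls are on trees with strictly fewer nodes.) -/
def g (t : BTree) : BTree := gF (size t) t


/-- ρ(T₁,…,T_k) is a root labeled 1 whose children are the T_j with root labels reset to 0:
each `lam 0 T` has root label 1, so every ⊕ gives 1 + 1 - 1 = 1. -/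
theorem rho_eq_node {Ts : List BTree} (hne : Ts ≠ []) :
    rho Ts = node 1 (Ts.map (setLabel 0)) := by
  induction Ts with
  | nil => exact absurd rfl hne
  | cons T Ts ih =>
    cases Ts with
    | nil => simp [rho, oplusList, lam]
    | cons U Us =>
      have h := ih (by simp)
      simp only [rho, List.map_cons, oplusList] at h ⊢
      rw [h]
      simp [oplus, lam, label, children]

theorem nuL_append_singleton (T : BTree) (j : ℕ) (ts : List BTree) (t : BTree) :
    nuL T j (ts ++ [t]) = ts ++ [nuT T j t] := by
  induction ts with
  | nil => simp [nuL]
  | cons a ts ih => cases ts <;> simp_all [nuL]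

theorem nuT_node_append_singleton (T : BTree) (j n : ℕ) (ts : List BTree) (t : BTree) :
    nuT T j (node n (ts ++ [t])) = node (n + j) (ts ++ [nuT T j t]) := by
  rw [← nuL_append_singleton]
  cases ts <;> simp [nuT]

/-- Gluing the root of `S` onto ε: the one node of ε is its rightmost leaf, so its label
becomes 1 and its children are those of `S`. -/
theorem mu_one_eps (S : BTree) : mu 1 S eps = node 1 S.children := by
  simp [mu, eps, muT, isOpenNode, children]

/-- For all β(0,1)-trees T₁, …, T_k (k ≥ 1),
ρ(T₁,…,T_k) = ν₁(σ(T_{k−1},…,T₁,ε), T_k). -/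
theorem rho_eq_nu_sigma (Ts : List BTree) (hne : Ts ≠ []) (hbeta : ∀ T ∈ Ts, IsBeta T) :
    rho Ts = nu 1 (sigma (Ts.dropLast.reverse ++ [eps])) (Ts.getLast hne) := by
  obtain ⟨D, T, rfl⟩ : ∃ D T, Ts = D ++ [T] :=
    ⟨Ts.dropLast, Ts.getLast hne, (List.dropLast_append_getLast hne).symm⟩
  have hσ : sigma (D.reverse ++ [eps]) = node 1 (D.map (setLabel 0) ++ [eps]) := by
    simp [sigma, mu_one_eps, rho_eq_node, children]
    simp [setLabel, children, eps]
  rw [rho_eq_node hne]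
  simp only [List.dropLast_concat, List.getLast_concat, hσ, nu, nuT_node_append_singleton]
  simp [nuT, eps, setLabel]

end BTree
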